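/- Fix γ > 0. With S, D(R,P), E_{γ,L}, and F_γ(L) as follows: S = {(R,P) : R > 0, P > 2^{2R} − 1}; s = P/(2^{2R} − 1); D(R,P) = (1/2)·(s − 1 − ln s); E_{γ,L}(R,P) = P/R + γ·max(1/R, 1)·max(0, ln(L/D(R,P))); F_γ(L) = inf_{(R,P) ∈ S} E_{γ,L}(R,P). Then for every ε > 0 there exist δ > 0 and L₀ > 1 such that for all L ≥ L₀ and all (R,P) ∈ S with E_{γ,L}(R,P) ≤ F_γ(L) + δ, one has |R − 1| < ε. In other words, the rate optimizing the combined transmission-plus-decoding energy bound is bounded away from zero and converges to 1 as the desired bit-error probability goes to zero (L = ln(1/⟨P_e⟩) → ∞). -/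

import Mathlib

open Real Filter

/-- `s = P / (2^(2R) - 1)` is the critical noise variance at which the AWGN
capacity equals `R` (noise variance normalized to `1`), and
`D(R,P) = (1/2)(s - 1 - ln s)` is the Gaussian KL divergence `D(s‖1)`. -/
noncomputable def greenKL (R P : ℝ) : ℝ :=
  (1 / 2) * (P / ((2 : ℝ) ^ (2 * R) - 1) - 1 -
    Real.log (P / ((2 : ℝ) ^ (2 * R) - 1)))

/-- Normalized total (transmission plus decoding) energy per information bit:
`E_{γ,L}(R,P) = P/R + γ * max (1/R) 1 * max 0 (ln (L / D(R,P)))`. -/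
noncomputable def greenEnergy (γ L R P : ℝ) : ℝ :=
  P / R + γ * max (1 / R) 1 * max 0 (Real.log (L / greenKL R P))

/-- `F_γ(L)`: the infimum of the energy bound over the feasible set
`S = {(R,P) : R > 0, P > 2^(2R) - 1}`. -/
noncomputable def greenMinEnergy (γ L : ℝ) : ℝ :=
  sInf {e : ℝ | ∃ R P : ℝ, 0 < R ∧ (2 : ℝ) ^ (2 * R) - 1 < P ∧
    e = greenEnergy γ L R P}

/-!
Write `s > 1` for the critical variance of `(R, P)`. The divergence and hence the logarithmic factor
depend on `s` alone, so a rate `R > 1` may be compared with rate `1` at the same `s`. Decoding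
does not get cheaper above rate `1`, whereas transmission costs `s * (2 ^ (2 * R) - 1) / R`, which
is at least `s * (R + 2)`, against `3 * s` at rate `1`; so rate `1` saves at
least `s * (R - 1)`, and this for every `L`.

Below rate `1` the gap comes from the slope in `ln L`. At rate `1` the energy is at most
`γ * ln L + O(1)`. If `R ≤ 1 - ε`, the factor `1 / R` exceeds `k / γ` for `k = γ * (1 + ε)`, and the
energy is at least `s + k * (ln L - ln s)`. The minimum over `s` is attained at `s = k`, so the
energy is at least `k * ln L + O(1)`, which eventually wins because `γ < k`.
-/

/-- The critical noise variance `σ_G*² = P / (2 ^ (2R) - 1)`, written `s` in the energy bound: the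
variance at which the AWGN capacity with power `P` equals the rate `R`. -/
noncomputable def criticalVariance (R P : ℝ) : ℝ :=
  P / ((2 : ℝ) ^ (2 * R) - 1)

section Inequalities

variable {R s k : ℝ}

lemma lt_two_rpow_two_mul_sub_one (hR : 0 < R) : R < (2 : ℝ) ^ (2 * R) - 1 := by
  have hexp : log 2 * (2 * R) + 1 ≤ (2 : ℝ) ^ (2 * R) := by
    rw [rpow_def_of_pos two_pos]
    exact add_one_le_exp _
  nlinarith [log_two_gt_d9]

lemma mul_add_two_le_two_rpow_two_mul_sub_one (hR : 1 ≤ R) :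
    R * (R + 2) ≤ (2 : ℝ) ^ (2 * R) - 1 := by
  have bernoulli : 1 + R ≤ (2 : ℝ) ^ R := by
    simpa [one_add_one_eq_two] using
      one_add_mul_self_le_rpow_one_add (by norm_num : (-1 : ℝ) ≤ 1) hR
  have hsq : (2 : ℝ) ^ (2 * R) = ((2 : ℝ) ^ R) ^ 2 := by
    rw [mul_comm, rpow_mul two_pos.le, rpow_two]
  have : (1 + R) ^ 2 ≤ ((2 : ℝ) ^ R) ^ 2 := by gcongr
  linarith

lemma mul_one_add_log_sub_log_le (hk : 0 < k) (hs : 0 < s) :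
    k * (1 + log s - log k) ≤ s := by
  have h : log (s / k) ≤ s / k - 1 := log_le_sub_one_of_pos (by positivity)
  rw [log_div hs.ne' hk.ne'] at h
  calc
    k * (1 + log s - log k) ≤ k * (s / k) := by gcongr; linarith
    _ = s := mul_div_cancel₀ s hk.ne'

end Inequalities

section CriticalVariance

variable {R P : ℝ}

lemma criticalVariance_one (P : ℝ) : criticalVariance 1 P = P / 3 := by
  norm_num [criticalVariance]

lemma one_lt_criticalVariance (hR : 0 < R) (hP : (2 : ℝ) ^ (2 * R) - 1 < P) :
    1 < criticalVariance R P :=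
  (one_lt_div (hR.trans (lt_two_rpow_two_mul_sub_one hR))).2 hP

lemma pos_of_two_rpow_two_mul_sub_one_lt (hR : 0 < R) (hP : (2 : ℝ) ^ (2 * R) - 1 < P) :
    0 < P :=
  hR.trans ((lt_two_rpow_two_mul_sub_one hR).trans hP)

lemma criticalVariance_le_div (hR : 0 < R) (hP : 0 ≤ P) : criticalVariance R P ≤ P / R :=
  div_le_div_of_nonneg_left hP hR (lt_two_rpow_two_mul_sub_one hR).le

lemma criticalVariance_mul_add_two_le_div (hR : 1 ≤ R) (hP : 0 ≤ P) :
    criticalVariance R P * (R + 2) ≤ P / R := by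
  have : 0 < R := by linarith
  calc
    criticalVariance R P * (R + 2) ≤ P / (R * (R + 2)) * (R + 2) := by
      unfold criticalVariance
      gcongr
      exact mul_add_two_le_two_rpow_two_mul_sub_one hR
    _ = P / R := by field_simp

end CriticalVariance

section Divergence

variable {R P : ℝ}

lemma greenKL_eq (R P : ℝ) :
    greenKL R P = 1 / 2 * (criticalVariance R P - 1 - log (criticalVariance R P)) :=
  rfl

lemma greenKL_pos (hR : 0 < R) (hP : (2 : ℝ) ^ (2 * R) - 1 < P) : 0 < greenKL R P := by
  have hs := one_lt_criticalVariance hR hP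
  have hlog := log_lt_sub_one_of_pos (zero_lt_one.trans hs) hs.ne'
  rw [greenKL_eq]
  linarith

lemma greenKL_le_criticalVariance (hR : 0 < R) (hP : (2 : ℝ) ^ (2 * R) - 1 < P) :
    greenKL R P ≤ criticalVariance R P := by
  have hs := one_lt_criticalVariance hR hP
  have hlog := log_pos hs
  rw [greenKL_eq]
  linarith

lemma greenKL_one_three_mul_criticalVariance (R P : ℝ) :
    greenKL 1 (3 * criticalVariance R P) = greenKL R P := by
  rw [greenKL_eq, greenKL_eq R P, criticalVariance_one, mul_div_cancel_left₀ _ three_ne_zero]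

lemma one_le_greenKL_one_twentyFour : 1 ≤ greenKL 1 24 := by
  have hlog : log 8 = 3 * log 2 := by
    rw [show (8 : ℝ) = 2 ^ 3 by norm_num, log_pow, Nat.cast_ofNat]
  rw [greenKL_eq, criticalVariance_one, show (24 : ℝ) / 3 = 8 by norm_num, hlog]
  linarith [log_two_lt_d9]

end Divergence

section Energy

variable {γ L R P k : ℝ}

lemma greenEnergy_one (γ L P : ℝ) :
    greenEnergy γ L 1 P = P + γ * max 0 (log (L / greenKL 1 P)) := by
  simp [greenEnergy]

lemma greenEnergy_nonneg (hγ : 0 ≤ γ) (hR : 0 ≤ R) (hP : 0 ≤ P) : 0 ≤ greenEnergy γ L R P := by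
  unfold greenEnergy
  positivity

lemma greenMinEnergy_le_greenEnergy (hγ : 0 ≤ γ) (hR : 0 < R)
    (hP : (2 : ℝ) ^ (2 * R) - 1 < P) : greenMinEnergy γ L ≤ greenEnergy γ L R P := by
  refine csInf_le ⟨0, ?_⟩ ⟨R, P, hR, hP, rfl⟩
  rintro _ ⟨R', P', hR', hP', rfl⟩
  exact greenEnergy_nonneg hγ hR'.le (pos_of_two_rpow_two_mul_sub_one_lt hR' hP').le

lemma greenMinEnergy_le_greenEnergy_one (hγ : 0 ≤ γ) (hP : 3 < P) :
    greenMinEnergy γ L ≤ greenEnergy γ L 1 P :=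
  greenMinEnergy_le_greenEnergy hγ one_pos (by norm_num [hP])

lemma greenEnergy_one_add_le_greenEnergy (hγ : 0 ≤ γ) (hR : 1 ≤ R) (hP : 0 ≤ P) :
    greenEnergy γ L 1 (3 * criticalVariance R P) + criticalVariance R P * (R - 1) ≤
      greenEnergy γ L R P := by
  have hdecode : γ * max 0 (log (L / greenKL R P)) ≤
      γ * max (1 / R) 1 * max 0 (log (L / greenKL R P)) := by
    gcongr
    exact le_mul_of_one_le_right hγ (le_max_right _ _)
  have htransmit := criticalVariance_mul_add_two_le_div hR hP
  rw [greenEnergy_one, greenKL_one_three_mul_criticalVariance, greenEnergy]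
  linarith

lemma greenMinEnergy_add_lt_greenEnergy (hγ : 0 ≤ γ) (hR : 1 < R)
    (hP : (2 : ℝ) ^ (2 * R) - 1 < P) :
    greenMinEnergy γ L + (R - 1) < greenEnergy γ L R P := by
  have hR₀ : 0 < R := one_pos.trans hR
  have hs := one_lt_criticalVariance hR₀ hP
  calc
    greenMinEnergy γ L + (R - 1)
      < greenEnergy γ L 1 (3 * criticalVariance R P) + criticalVariance R P * (R - 1) :=
        add_lt_add_of_le_of_lt (greenMinEnergy_le_greenEnergy_one hγ (by linarith))
          (lt_mul_of_one_lt_left (sub_pos.2 hR) hs)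
    _ ≤ greenEnergy γ L R P :=
        greenEnergy_one_add_le_greenEnergy hγ hR.le (pos_of_two_rpow_two_mul_sub_one_lt hR₀ hP).le

lemma greenMinEnergy_le_add_mul_log (hγ : 0 ≤ γ) (hL : 1 ≤ L) :
    greenMinEnergy γ L ≤ 24 + γ * log L := by
  -- The power `24` makes the divergence at least `1`, so that dividing by it only shrinks `L`.
  have hD := one_le_greenKL_one_twentyFour
  have hlog : log (L / greenKL 1 24) ≤ log L :=
    log_le_log (by positivity) (div_le_self (by positivity) hD)
  calc
    greenMinEnergy γ L ≤ greenEnergy γ L 1 24 :=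
      greenMinEnergy_le_greenEnergy_one hγ (by norm_num)
    _ = 24 + γ * max 0 (log (L / greenKL 1 24)) := greenEnergy_one ..
    _ ≤ 24 + γ * log L := by gcongr; exact max_le (log_nonneg hL) hlog

lemma mul_log_add_one_sub_log_le_greenEnergy (hL : 0 < L) (hk : 0 < k)
    (hkR : k ≤ γ * max (1 / R) 1) (hR : 0 < R) (hP : (2 : ℝ) ^ (2 * R) - 1 < P) :
    k * (log L + 1 - log k) ≤ greenEnergy γ L R P := by
  set s := criticalVariance R P
  have hs : 0 < s := one_pos.trans (one_lt_criticalVariance hR hP)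
  have htransmit : s ≤ P / R :=
    criticalVariance_le_div hR (pos_of_two_rpow_two_mul_sub_one_lt hR hP).le
  have hlog : log L - log s ≤ log (L / greenKL R P) := by
    rw [log_div hL.ne' (greenKL_pos hR hP).ne']
    gcongr
    exacts [greenKL_pos hR hP, greenKL_le_criticalVariance hR hP]
  calc
    k * (log L + 1 - log k) = k * (1 + log s - log k) + k * (log L - log s) := by ring
    _ ≤ P / R + k * max 0 (log (L / greenKL R P)) := by
      gcongr
      exacts [(mul_one_add_log_sub_log_le hk hs).trans htransmit, hlog.trans (le_max_right _ _)]
    _ ≤ greenEnergy γ L R P := by unfold greenEnergy; gcongr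

lemma eventually_greenMinEnergy_add_lt_greenEnergy (hγ : 0 < γ) {ε : ℝ} (hε : 0 < ε) (δ : ℝ) :
    ∀ᶠ L in atTop, ∀ R P : ℝ, 0 < R → R ≤ 1 - ε → (2 : ℝ) ^ (2 * R) - 1 < P →
      greenMinEnergy γ L + δ < greenEnergy γ L R P := by
  set k := γ * (1 + ε) with hk
  have hslope : Tendsto (fun L ↦ γ * ε * log L) atTop atTop :=
    tendsto_log_atTop.const_mul_atTop (by positivity)
  filter_upwards [hslope.eventually_gt_atTop (24 + δ - k * (1 - log k)), eventually_ge_atTop 1]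
    with L hgap hL R P hR hRε hP
  have hkR : k ≤ γ * max (1 / R) 1 := by
    have hinv : 1 + ε ≤ 1 / R := by
      rw [le_div_iff₀ hR]
      nlinarith
    exact mul_le_mul_of_nonneg_left (hinv.trans (le_max_left _ _)) hγ.le
  calc
    greenMinEnergy γ L + δ ≤ 24 + γ * log L + δ := by
      gcongr
      exact greenMinEnergy_le_add_mul_log hγ.le hL
    _ < γ * ε * log L + k * (1 - log k) + γ * log L := by linarith
    _ = k * (log L + 1 - log k) := by rw [hk]; ring
    _ ≤ greenEnergy γ L R P :=
      mul_log_add_one_sub_log_le_greenEnergy (by positivity) (by positivity) hkR hR hP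

end Energy

/-- The rate optimizing the combined transmission-plus-decoding energy bound
converges to `1` as the desired bit-error probability goes to zero
(`L = ln (1/⟨P_e⟩) → ∞`): every near-optimal `(R,P)` has `R` close to `1`. -/
theorem green_optimal_rate_tendsto_one (γ : ℝ) (hγ : 0 < γ) :
    ∀ ε : ℝ, 0 < ε → ∃ δ : ℝ, 0 < δ ∧ ∃ L₀ : ℝ, 1 < L₀ ∧
      ∀ L : ℝ, L₀ ≤ L → ∀ R P : ℝ, 0 < R → (2 : ℝ) ^ (2 * R) - 1 < P →
        greenEnergy γ L R P ≤ greenMinEnergy γ L + δ → |R - 1| < ε := by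
  intro ε hε
  obtain ⟨L₀, hL₀⟩ := ((eventually_greenMinEnergy_add_lt_greenEnergy hγ hε ε).and
    (eventually_gt_atTop 1)).exists_forall_of_atTop
  refine ⟨ε, hε, L₀, (hL₀ L₀ le_rfl).2, fun L hL R P hR hP hE ↦ abs_sub_lt_iff.2 ⟨?_, ?_⟩⟩
  · by_contra! hhigh
    have := greenMinEnergy_add_lt_greenEnergy (L := L) hγ.le (by linarith) hP
    linarith
  · by_contra! hlow
    exact hE.not_gt ((hL₀ L hL).1 R P hR (by linarith) hP)
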